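/- Let p be a prime, e > 1, and q = p^e. Suppose that for every integer t' > e and every integer r with ⌈(e + t' − 1)/(e − 1)⌉ ≤ r ≤ 1 + t' there exists a normalized generalized Hadamard matrix H over F_q of order p^{t'} such that C_H is F_p-additive with ker(C_H) = 1 and rank(C_H) = r. Then for every integer t > e, every integer k with 2 ≤ k ≤ ⌊t/e⌋, and every integer r with ⌈(e + t − k)/(e − 1)⌉ ≤ r ≤ 1 + t − (e−1)(k−1), there exists a normalized GH matrix H over F_q of order p^t such that C_H is F_p-additive with ker(C_H) = k and rank(C_H) = r. -/

import Mathlib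

/-!
The matrices are built on the level of codes (`IsAddGH`): additive groups of functions `ι → F`
containing the constants, of the right size, whose nonconstant members take every value equally
often. Such codes are the same thing as the codes of normalized generalized Hadamard matrices
(`good_of_matrix`, `matrix_of_good`).

The Kronecker sum with the multiplication table of `F` (`Good.step`) replaces `S` by the code of all
`(i, a) ↦ v i + b * a` with `v ∈ S`, `b ∈ F`. It multiplies the length by `q = p ^ e` and raises both
the kernel dimension and the rank by one. If `t > e * k`, then `k - 1` such steps, started from a
code of length `p ^ (t - e * (k - 1))` with one-dimensional kernel, give the claim.

If `t = e * k`, that start would have length `q`, which the hypothesis does not cover (for `q = 4`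
there is no suitable code). The bounds on `r` then read `k + 2 ≤ r ≤ k + e`, and one starts instead
from a code of length `q ^ 2` with kernel dimension two (`good_base`), consisting of the functions
`(a, s) ↦ α + b * a + u * s + ∑ i < m, u ^ p ^ (i + 1) * a ^ (i + 2)` with `α, b, u ∈ F`, where
`1 ≤ m ≤ e - 1`. For `u ≠ 0` such a function is bijective in `s` for each fixed `a`, hence balanced.
The vectors `(u, u ^ p, …, u ^ p ^ m)` span `F ^ (m + 1)` by independence of characters, so the rank
is `m + 3`. Since `c ^ p = c` fails for some `c ∈ F`, no nonzero vector of this form has all its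
multiples of the same form, so the kernel consists of the functions with `u = 0`.
-/

open scoped BigOperators

section Defs

variable {ι : Type*} {F : Type*} [Field F]

/-- `H` is a generalised Hadamard matrix with parameter `lam`: for any two distinct rows,
every difference value is attained exactly `lam` times. -/
def IsGH (lam : ℕ) (H : Matrix ι ι F) : Prop :=
  ∀ i j : ι, i ≠ j → ∀ a : F, Nat.card {s : ι // H i s - H j s = a} = lam

/-- The generalised Hadamard code `C_H` associated to a matrix `H`: the union of all
translates of the rows of `H` by constant vectors. -/
def ghCode (H : Matrix ι ι F) : Set (ι → F) :=
  {v | ∃ (i : ι) (α : F), v = fun s => H i s + α}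

/-- The kernel `K(C)` of a code `C`. -/
def kerSet (C : Set (ι → F)) : Set (ι → F) :=
  {x | ∀ α : F, (fun c => α • x + c) '' C = C}

/-- The `p`-kernel `K_p(C)` of a code `C`. -/
def pkerSet (C : Set (ι → F)) : Set (ι → F) :=
  {x | (fun c => x + c) '' C = C}

end Defs

/-- A matrix is normalized if its first row and first column are identically zero. -/
def IsNormalized {n : ℕ} {F : Type*} [Zero F] (H : Matrix (Fin n) (Fin n) F) : Prop :=
  ∀ i j : Fin n, (i.val = 0 ∨ j.val = 0) → H i j = 0

/-- A code over `GF(p^e)` is `F_p`-additive if it is an `F_p`-linear subspace. -/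
def IsFpAdditive (p : ℕ) [Fact p.Prime] {e : ℕ} {ι : Type*}
    (C : Set (ι → GaloisField p e)) : Prop :=
  ∃ S : Submodule (ZMod p) (ι → GaloisField p e), C = ↑S

/-- The rank of a code: the dimension over `F` of its `F`-linear span. -/
noncomputable def rankC (F : Type*) [Field F] {ι : Type*} (C : Set (ι → F)) : ℕ :=
  Module.finrank F (Submodule.span F C)

/-- The dimension over `F` of the kernel of a code. -/
noncomputable def kerDim (F : Type*) [Field F] {ι : Type*} (C : Set (ι → F)) : ℕ :=
  Module.finrank F (Submodule.span F (kerSet C))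

/-! ### Additive codes, their kernels and ranks -/

section AddGH

variable {F : Type} [Field F]

/-- The largest `F`-subspace contained in an additive subgroup `S`; for a code `S` this is the
kernel of the code. -/
def kerSub {M : Type*} [AddCommGroup M] [Module F M] (S : AddSubgroup M) : Submodule F M where
  carrier := {x | ∀ α : F, α • x ∈ S}
  zero_mem' := fun α => by simp
  add_mem' := fun ha hb α => by
    rw [smul_add]
    exact S.add_mem (ha α) (hb α)
  smul_mem' := fun c x hx α => by
    rw [smul_smul]
    exact hx _

lemma mem_kerSub {M : Type*} [AddCommGroup M] [Module F M] {S : AddSubgroup M} {x : M} :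
    x ∈ kerSub (F := F) S ↔ ∀ α : F, α • x ∈ S := Iff.rfl

lemma kerSet_eq {ι : Type*} (S : AddSubgroup (ι → F)) :
    kerSet (S : Set (ι → F)) = (kerSub (F := F) S : Set (ι → F)) := by
  ext x
  simp only [kerSet, Set.mem_ofPred_eq, SetLike.mem_coe, mem_kerSub]
  refine forall_congr' fun α => ⟨fun h => ?_, fun h => ?_⟩
  · have h0 : α • x + 0 ∈ (S : Set (ι → F)) := h ▸ ⟨0, S.zero_mem, rfl⟩
    simpa using h0
  · ext y
    constructor
    · rintro ⟨c, hc, rfl⟩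
      exact S.add_mem h hc
    · intro hy
      exact ⟨y - α • x, S.sub_mem hy h, by simp⟩

lemma kerDim_eq {ι : Type*} (S : AddSubgroup (ι → F)) :
    kerDim F (S : Set (ι → F)) = Module.finrank F (kerSub (F := F) S) := by
  rw [kerDim, kerSet_eq, Submodule.span_eq]

section Map

variable {M N : Type*} [AddCommGroup M] [Module F M] [AddCommGroup N] [Module F N]

lemma finrank_map_inj (f : M →ₗ[F] N) (hf : Function.Injective f) (K : Submodule F M) :
    Module.finrank F (K.map f) = Module.finrank F K :=
  (LinearEquiv.finrank_eq (Submodule.equivMapOfInjective f hf K)).symm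

lemma finrank_kerSub_map (f : M →ₗ[F] N) (hf : Function.Injective f) (S : AddSubgroup M) :
    Module.finrank F (kerSub (F := F) (S.map f.toAddMonoidHom)) =
      Module.finrank F (kerSub (F := F) S) := by
  rw [← finrank_map_inj f hf]
  suffices h : kerSub (F := F) (S.map f.toAddMonoidHom) = (kerSub (F := F) S).map f by rw [h]
  ext y
  simp only [Submodule.mem_map, mem_kerSub, AddSubgroup.mem_map, LinearMap.toAddMonoidHom_coe]
  constructor
  · intro h
    obtain ⟨x, hx, hxy⟩ := h 1
    rw [one_smul] at hxy
    subst hxy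
    refine ⟨x, fun α => ?_, rfl⟩
    obtain ⟨z, hz, hzx⟩ := h α
    rw [← map_smul] at hzx
    exact hf hzx ▸ hz
  · rintro ⟨x, hx, rfl⟩ α
    exact ⟨α • x, hx α, map_smul _ _ _⟩

lemma finrank_span_map (f : M →ₗ[F] N) (hf : Function.Injective f) (S : AddSubgroup M) :
    Module.finrank F (Submodule.span F (S.map f.toAddMonoidHom : Set N)) =
      Module.finrank F (Submodule.span F (S : Set M)) := by
  rw [← finrank_map_inj f hf, Submodule.map_span]
  rfl

lemma card_map_inj (f : M →ₗ[F] N) (hf : Function.Injective f) (S : AddSubgroup M) :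
    Nat.card (S.map f.toAddMonoidHom) = Nat.card S :=
  (Nat.card_congr (S.equivMapOfInjective f.toAddMonoidHom hf).toEquiv).symm

lemma finrank_submodule_prod [Module.Finite F M] [Module.Finite F N]
    (K : Submodule F M) (L : Submodule F N) :
    Module.finrank F (K.prod L) = Module.finrank F K + Module.finrank F L := by
  rw [← Module.finrank_prod]
  exact LinearEquiv.finrank_eq
    { toFun := fun x => (⟨x.1.1, x.2.1⟩, ⟨x.1.2, x.2.2⟩)
      invFun := fun y => ⟨(y.1.1, y.2.1), y.1.2, y.2.2⟩
      map_add' := fun _ _ => rfl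
      map_smul' := fun _ _ => rfl
      left_inv := fun _ => rfl
      right_inv := fun _ => rfl }

lemma kerSub_prod (S : AddSubgroup M) (T : AddSubgroup N) :
    kerSub (F := F) (S.prod T) = (kerSub S).prod (kerSub T) := by
  ext x
  simp only [Submodule.mem_prod, mem_kerSub, AddSubgroup.mem_prod, Prod.smul_fst, Prod.smul_snd]
  exact forall_and

lemma kerSub_top : kerSub (F := F) (⊤ : AddSubgroup M) = ⊤ := by
  ext x
  simp [mem_kerSub]

lemma span_addSubgroup_prod (S : AddSubgroup M) (T : AddSubgroup N) :
    Submodule.span F ((S.prod T : AddSubgroup (M × N)) : Set (M × N)) =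
      (Submodule.span F (S : Set M)).prod (Submodule.span F (T : Set N)) := by
  apply le_antisymm
  · rw [Submodule.span_le]
    rintro ⟨x, y⟩ ⟨hx, hy⟩
    exact ⟨Submodule.subset_span hx, Submodule.subset_span hy⟩
  · rw [← LinearMap.span_inl_union_inr]
    refine Submodule.span_mono ?_
    rintro _ (⟨x, hx, rfl⟩ | ⟨y, hy, rfl⟩)
    · exact ⟨hx, T.zero_mem⟩
    · exact ⟨S.zero_mem, hy⟩

end Map

/-- `S` is an `F_p`-additive generalized Hadamard code of length `p ^ t` over a field with `p ^ e`
elements: an additive group of `p ^ (t + e)` words containing the constants, whose nonconstant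
words take every value equally often. -/
structure IsAddGH (p e t : ℕ) {ι : Type} (S : AddSubgroup (ι → F)) : Prop where
  card_index : Nat.card ι = p ^ t
  const_mem : ∀ α : F, (fun _ => α) ∈ S
  card_code : Nat.card S = p ^ (t + e)
  balanced : ∀ v ∈ S, (¬ ∃ α : F, v = fun _ => α) →
    ∀ a : F, Nat.card {s // v s = a} = p ^ (t - e)

/-- There is an additive generalized Hadamard code of length `p ^ t` over `F` with kernel of
dimension `k` and rank `r`. -/
def Good (F : Type) [Field F] (p e t k r : ℕ) : Prop :=
  ∃ (ι : Type) (_ : Finite ι) (S : AddSubgroup (ι → F)), IsAddGH p e t S ∧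
    Module.finrank F (kerSub (F := F) S) = k ∧
    Module.finrank F (Submodule.span F (S : Set (ι → F))) = r

end AddGH

/-! ### Kronecker sum with the multiplication table of `F` -/

/-- The map `(v, b) ↦ ((i, a) ↦ v i + b * a)` behind the Kronecker sum with the multiplication
table of `F`. -/
def kronMap (F ι : Type) [Field F] : ((ι → F) × F) →ₗ[F] (ι × F → F) where
  toFun x := fun s => x.1 s.1 + x.2 * s.2
  map_add' x y := by
    ext s
    simp only [Prod.fst_add, Prod.snd_add, Pi.add_apply]
    ring
  map_smul' c x := by
    ext s
    simp only [Prod.smul_fst, Prod.smul_snd, Pi.smul_apply, smul_eq_mul, RingHom.id_apply]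
    ring

lemma kronMap_injective (F ι : Type) [Field F] [Nonempty ι] :
    Function.Injective (kronMap F ι) := by
  rw [← LinearMap.ker_eq_bot, LinearMap.ker_eq_bot']
  rintro ⟨v, b⟩ h
  have h' : ∀ i a, v i + b * a = 0 := fun i a => congrFun h (i, a)
  have hv : v = 0 := funext fun i => by simpa using h' i 0
  obtain ⟨i⟩ := ‹Nonempty ι›
  have hb : b = 0 := by simpa [hv] using h' i 1
  rw [hv, hb]
  rfl

/-- Kronecker sum with the multiplication table of `F`: the length is multiplied by `p ^ e`, while
the kernel dimension and the rank both grow by one. -/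
lemma Good.step {F : Type} [Field F] [Finite F] {p e t k r : ℕ} (hp : p ≠ 0)
    (hF : Nat.card F = p ^ e) (het : e ≤ t) (h : Good F p e t k r) :
    Good F p e (t + e) (k + 1) (r + 1) := by
  obtain ⟨ι, hι, S, hS, hk, hr⟩ := h
  have hne : Nonempty ι := by
    have : Nat.card ι ≠ 0 := by rw [hS.card_index]; exact pow_ne_zero _ hp
    exact (Nat.card_ne_zero.mp this).1
  have hinj := kronMap_injective F ι
  refine ⟨ι × F, inferInstance, (S.prod ⊤).map (kronMap F ι).toAddMonoidHom, ⟨?_, ?_, ?_, ?_⟩,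
    ?_, ?_⟩
  · rw [Nat.card_prod, hS.card_index, hF, pow_add]
  · intro α
    exact ⟨(fun _ => α, 0), ⟨hS.const_mem α, trivial⟩, by ext s; simp [kronMap]⟩
  · rw [card_map_inj _ hinj, Nat.card_congr (AddSubgroup.prodEquiv S ⊤).toEquiv, Nat.card_prod,
      hS.card_code, AddSubgroup.card_top, hF, ← pow_add]
  · rintro _ ⟨⟨v, b⟩, ⟨hv, -⟩, rfl⟩ hc a
    have happ : ∀ s : ι × F, (kronMap F ι).toAddMonoidHom (v, b) s = v s.1 + b * s.2 :=
      fun _ => rfl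
    simp only [happ]
    rw [Nat.add_sub_cancel]
    by_cases hb : b = 0
    · subst hb
      have hv' : ¬ ∃ α : F, v = fun _ => α := by
        rintro ⟨α, rfl⟩
        exact hc ⟨α, by ext s; simp [happ]⟩
      have e1 : {s : ι × F // v s.1 + 0 * s.2 = a} ≃ {i // v i = a} × F :=
        { toFun := fun s => (⟨s.1.1, by simpa using s.2⟩, s.1.2)
          invFun := fun x => ⟨(x.1.1, x.2), by simpa using x.1.2⟩
          left_inv := fun _ => rfl
          right_inv := fun _ => rfl }
      rw [Nat.card_congr e1, Nat.card_prod, hS.balanced v hv hv' a, hF, ← pow_add]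
      congr 1
      omega
    · have e1 : {s : ι × F // v s.1 + b * s.2 = a} ≃ ι :=
        { toFun := fun s => s.1.1
          invFun := fun i => ⟨(i, b⁻¹ * (a - v i)), by field_simp; ring⟩
          left_inv := by
            rintro ⟨⟨i, x⟩, rfl⟩
            ext
            · rfl
            · simp [hb]
          right_inv := fun _ => rfl }
      rw [Nat.card_congr e1, hS.card_index]
  · rw [finrank_kerSub_map _ hinj, kerSub_prod, finrank_submodule_prod, hk, kerSub_top,
      finrank_top, Module.finrank_self]
  · rw [finrank_span_map _ hinj, span_addSubgroup_prod, finrank_submodule_prod, hr,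
      AddSubgroup.coe_top, Submodule.span_univ, finrank_top, Module.finrank_self]

lemma Good.iterate {F : Type} [Field F] [Finite F] {p e t k r : ℕ} (hp : p ≠ 0)
    (hF : Nat.card F = p ^ e) (het : e ≤ t) (h : Good F p e t k r) (n : ℕ) :
    Good F p e (t + e * n) (k + n) (r + n) := by
  induction n with
  | zero => simpa using h
  | succ n ih =>
    have := ih.step hp hF (by omega)
    rwa [show t + e * (n + 1) = t + e * n + e by ring]

/-! ### A code of length `q ^ 2` with two-dimensional kernel -/

/-- The map `u ↦ (u, u ^ p, …, u ^ p ^ m)`. -/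
def frobTuple (F : Type) [Field F] (p m : ℕ) [ExpChar F p] : F →+ (Fin (m + 1) → F) where
  toFun u := fun i => iterateFrobenius F p i u
  map_zero' := by ext; simp
  map_add' u v := by ext; simp

lemma frobTuple_apply (F : Type) [Field F] (p m : ℕ) [ExpChar F p] (u : F) (i : Fin (m + 1)) :
    frobTuple F p m u i = u ^ p ^ (i : ℕ) := rfl

lemma frob_distinct {F : Type} [Field F] [Finite F] {p e i j : ℕ} (hp : 1 < p)
    (hF : Nat.card F = p ^ e) (hi : i < e) (hj : j < e)
    (h : ∀ x : F, x ^ p ^ i = x ^ p ^ j) : i = j := by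
  have := Fintype.ofFinite F
  rw [Nat.card_eq_fintype_card] at hF
  have h1 : (Polynomial.X ^ p ^ i : Polynomial F) = Polynomial.X ^ p ^ j := by
    apply Polynomial.eq_of_natDegree_lt_card_of_eval_eq _ _ (f := (id : F → F))
      Function.injective_id
    · intro x
      simpa using h x
    · simp only [Polynomial.natDegree_X_pow, hF]
      exact max_lt (Nat.pow_lt_pow_right hp hi) (Nat.pow_lt_pow_right hp hj)
  have h2 := congrArg Polynomial.natDegree h1
  simp only [Polynomial.natDegree_X_pow] at h2
  exact Nat.pow_right_injective hp h2

/-- Independence of the distinct Frobenius powers, viewed as characters. -/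
lemma span_frobTuple {F : Type} [Field F] [Finite F] {p e m : ℕ} [ExpChar F p] (hp : 1 < p)
    (hF : Nat.card F = p ^ e) (hm : m < e) :
    Submodule.span F ((frobTuple F p m).range : Set (Fin (m + 1) → F)) = ⊤ := by
  by_contra hne
  obtain ⟨f, hf0, hf⟩ := Submodule.exists_le_ker_of_lt_top _ (lt_top_iff_ne_top.mpr hne)
  apply hf0
  have hli : LinearIndependent F
      (fun i : Fin (m + 1) => ((iterateFrobenius F p i : F →* F) : F → F)) := by
    refine (linearIndependent_monoidHom F F).comp
      (fun i : Fin (m + 1) => (iterateFrobenius F p i : F →* F)) ?_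
    intro i j hij
    exact Fin.ext (frob_distinct hp hF (by omega) (by omega) fun x => DFunLike.congr_fun hij x)
  rw [Fintype.linearIndependent_iff] at hli
  have hz := hli (fun i => f fun j => if i = j then 1 else 0) (by
    ext u
    have h0 : f (frobTuple F p m u) = 0 := hf (Submodule.subset_span ⟨u, rfl⟩)
    rw [LinearMap.pi_apply_eq_sum_univ] at h0
    rw [Finset.sum_apply, Pi.zero_apply]
    refine Eq.trans ?_ h0
    exact Finset.sum_congr rfl fun i _ => mul_comm _ _)
  refine LinearMap.ext fun x => ?_
  rw [LinearMap.pi_apply_eq_sum_univ, LinearMap.zero_apply]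
  exact Finset.sum_eq_zero fun i _ => by rw [hz i, smul_zero]

/-- A Frobenius tuple all of whose scalar multiples are Frobenius tuples is zero. -/
lemma kerSub_frobTuple {F : Type} [Field F] [Finite F] {p e m : ℕ} [ExpChar F p] (hp : 1 < p)
    (hF : Nat.card F = p ^ e) (hm : m < e) (hm0 : 1 ≤ m) :
    kerSub (F := F) (frobTuple F p m).range = ⊥ := by
  rw [eq_bot_iff]
  intro x hx
  obtain ⟨u, rfl⟩ : x ∈ (frobTuple F p m).range := by simpa using mem_kerSub.mp hx 1
  by_cases hu : u = 0
  · simp [hu]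
  exfalso
  refine absurd (frob_distinct (F := F) (i := 1) (j := 0) hp hF (by omega) (by omega) ?_)
    one_ne_zero
  intro α
  obtain ⟨w, hw⟩ := mem_kerSub.mp hx α
  have h0 := congrFun hw 0
  have h1 := congrFun hw ⟨1, by omega⟩
  simp only [Pi.smul_apply, frobTuple_apply, smul_eq_mul, Fin.val_zero, pow_zero, pow_one]
    at h0 h1
  rw [h0, mul_pow] at h1
  simpa using mul_right_cancel₀ (pow_ne_zero p hu) h1

/-- The map sending `((α, b), d)` to the function
`(a, s) ↦ α + b * a + d₀ * s + ∑ i, dᵢ₊₁ * a ^ (i + 2)` on `F × F`. -/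
def polyMap (F : Type) [Field F] (m : ℕ) : ((F × F) × (Fin (m + 1) → F)) →ₗ[F] (F × F → F) where
  toFun x := fun y => x.1.1 + x.1.2 * y.1 + x.2 0 * y.2 +
    ∑ i : Fin m, x.2 i.succ * y.1 ^ (i + 2 : ℕ)
  map_add' x y := by
    ext s
    simp only [Prod.fst_add, Prod.snd_add, Pi.add_apply, add_mul, Finset.sum_add_distrib]
    ring
  map_smul' c x := by
    ext s
    simp only [Prod.smul_fst, Prod.smul_snd, Pi.smul_apply, smul_eq_mul, RingHom.id_apply,
      mul_add, Finset.mul_sum, mul_assoc]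

open Polynomial in
lemma polyMap_injective (F : Type) [Field F] [Finite F] (m : ℕ) (hm : m + 1 < Nat.card F) :
    Function.Injective (polyMap F m) := by
  have := Fintype.ofFinite F
  rw [Nat.card_eq_fintype_card] at hm
  rw [← LinearMap.ker_eq_bot, LinearMap.ker_eq_bot']
  rintro ⟨⟨α, b⟩, d⟩ h
  have h' : ∀ a s, α + b * a + d 0 * s + ∑ i : Fin m, d i.succ * a ^ (i + 2 : ℕ) = 0 :=
    fun a s => congrFun h (a, s)
  have hd0 : d 0 = 0 := by linear_combination h' 0 1 - h' 0 0
  let P : F[X] := C α + C b * X + ∑ i : Fin m, C (d i.succ) * X ^ (i + 2 : ℕ)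
  have hP : P = 0 := by
    apply eq_zero_of_natDegree_lt_card_of_eval_eq_zero P (f := (id : F → F)) Function.injective_id
    · intro a
      simp only [P, eval_add, eval_mul, eval_C, eval_X, eval_finsetSum, eval_pow, id]
      simpa using h' a 0
    · refine lt_of_le_of_lt ?_ hm
      refine natDegree_add_le_of_degree_le (natDegree_add_le_of_degree_le (by simp) ?_)
        (natDegree_sum_le_of_forall_le _ _ fun i _ => ?_)
      · exact (natDegree_C_mul_le b X).trans (natDegree_X_le.trans (by omega))
      · exact (natDegree_C_mul_X_pow_le _ _).trans (by omega)
  have hc : ∀ n, P.coeff n = 0 := fun n => by rw [hP, coeff_zero]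
  have hα : α = 0 := by simpa [P, coeff_X, coeff_C] using hc 0
  have hb : b = 0 := by simpa [P, coeff_X, coeff_C] using hc 1
  have hd : ∀ j : Fin m, d j.succ = 0 := fun j => by
    have := hc (j + 2)
    simpa [P, coeff_X, coeff_C, coeff_X_pow, Fin.val_inj] using this
  have : d = 0 := funext fun j => by
    refine Fin.cases hd0 hd j
  rw [hα, hb, this]
  rfl

/-- The words `α + b * a + u * s + ∑ i, u ^ p ^ (i + 1) * a ^ (i + 2)` form an additive generalized
Hadamard code on `F × F`. For fixed `a` it is a translate, depending on `a`, of the multiplication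
table of `F`; the translations make the rank grow and keep the kernel at dimension two. -/
lemma good_base {F : Type} [Field F] [Finite F] {p e m : ℕ} [ExpChar F p] (hp : 1 < p)
    (hF : Nat.card F = p ^ e) (hm : m < e) (hm0 : 1 ≤ m) :
    Good F p e (e + e) 2 (m + 3) := by
  have hinj := polyMap_injective F m (by
    rw [hF]; exact lt_of_le_of_lt (by omega) (Nat.lt_pow_self hp))
  refine ⟨F × F, inferInstance,
    ((⊤ : AddSubgroup (F × F)).prod (frobTuple F p m).range).map (polyMap F m).toAddMonoidHom,
    ⟨?_, ?_, ?_, ?_⟩, ?_, ?_⟩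
  · rw [Nat.card_prod, hF, pow_add]
  · intro α
    exact ⟨((α, 0), 0), ⟨trivial, zero_mem _⟩, by ext s; simp [polyMap]⟩
  · have hfi : Function.Injective (frobTuple F p m) := fun u v huv => by
      simpa [frobTuple_apply] using congrFun huv 0
    rw [card_map_inj _ hinj, Nat.card_congr (AddSubgroup.prodEquiv _ _).toEquiv, Nat.card_prod,
      AddSubgroup.card_top, Nat.card_prod, hF,
      ← Nat.card_congr (AddMonoidHom.ofInjective hfi).toEquiv, hF, pow_add, pow_add]
  · rintro _ ⟨⟨⟨α, b⟩, d⟩, ⟨-, u, hu⟩, rfl⟩ hc c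
    obtain rfl : frobTuple F p m u = d := hu
    have happ : ∀ y : F × F, (polyMap F m).toAddMonoidHom ((α, b), frobTuple F p m u) y =
        α + b * y.1 + u * y.2 + ∑ i : Fin m, u ^ p ^ (i + 1 : ℕ) * y.1 ^ (i + 2 : ℕ) := by
      intro y
      simp [polyMap, frobTuple_apply]
    simp only [happ]
    rw [Nat.add_sub_cancel, ← hF]
    have hp0 : ∀ n, p ^ n ≠ 0 := fun n => pow_ne_zero _ (by omega)
    by_cases h0 : u = 0
    · subst h0
      have hb : b ≠ 0 := by
        rintro rfl
        refine hc ⟨α, ?_⟩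
        ext s
        rw [happ]
        simp only [zero_pow (hp0 _), zero_mul, Finset.sum_const_zero, add_zero]
      simp only [zero_pow (hp0 _), zero_mul, Finset.sum_const_zero, add_zero]
      exact Nat.card_congr
        { toFun := fun y => y.1.2
          invFun := fun s => ⟨(b⁻¹ * (c - α), s), by field_simp; ring⟩
          left_inv := by
            rintro ⟨⟨a, s⟩, rfl⟩
            ext
            · simp [hb]
            · rfl
          right_inv := fun _ => rfl }
    · exact Nat.card_congr
        { toFun := fun y => y.1.1
          invFun := fun a => ⟨(a, u⁻¹ * (c - (α + b * a +
            ∑ i : Fin m, u ^ p ^ (i + 1 : ℕ) * a ^ (i + 2 : ℕ)))), by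
              simp only [mul_inv_cancel_left₀ h0]; ring⟩
          left_inv := by
            rintro ⟨⟨a, s⟩, rfl⟩
            ext
            · rfl
            · field_simp
              ring
          right_inv := fun _ => rfl }
  · rw [finrank_kerSub_map _ hinj, kerSub_prod, finrank_submodule_prod, kerSub_top,
      kerSub_frobTuple hp hF hm hm0, finrank_top, finrank_bot, Module.finrank_prod,
      Module.finrank_self]
  · rw [finrank_span_map _ hinj, span_addSubgroup_prod, finrank_submodule_prod,
      span_frobTuple hp hF hm, AddSubgroup.coe_top, Submodule.span_univ, finrank_top, finrank_top,
      Module.finrank_prod, Module.finrank_self, Module.finrank_fin_fun]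
    omega

/-! ### Passing between matrices and codes -/

/-- The code of a normalized matrix is an additive generalized Hadamard code. The zero row provides
the constant words, and comparison with it gives the balancedness of the others. -/
lemma good_of_matrix {p e t k r : ℕ} [Fact p.Prime] (he : 0 < e) (het : e ≤ t)
    (H : Matrix (Fin (p ^ t)) (Fin (p ^ t)) (GaloisField p e))
    (hGH : IsGH (p ^ (t - e)) H) (hN : IsNormalized H) (hA : IsFpAdditive p (ghCode H))
    (hk : kerDim (GaloisField p e) (ghCode H) = k)
    (hr : rankC (GaloisField p e) (ghCode H) = r) :
    Good (GaloisField p e) p e t k r := by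
  have hp : 1 < p := (Fact.out : p.Prime).one_lt
  have hpos : 0 < p ^ t := pow_pos (by omega) _
  obtain ⟨S, hS⟩ := hA
  have hmem : ∀ v, v ∈ S.toAddSubgroup ↔
      ∃ (i : Fin (p ^ t)) (α : GaloisField p e), v = fun s => H i s + α := by
    intro v
    change v ∈ (S : Set _) ↔ _
    rw [← hS]
    rfl
  have hrow : ∀ s, H ⟨0, hpos⟩ s = 0 := fun s => hN _ _ (Or.inl rfl)
  refine ⟨Fin (p ^ t), inferInstance, S.toAddSubgroup, ⟨by simp, ?_, ?_, ?_⟩, ?_, ?_⟩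
  · intro α
    rw [hmem]
    exact ⟨⟨0, hpos⟩, α, by ext s; rw [hrow, zero_add]⟩
  · have hb : Function.Bijective
        (fun x : Fin (p ^ t) × GaloisField p e =>
          (⟨fun s => H x.1 s + x.2, (hmem _).mpr ⟨_, _, rfl⟩⟩ : S.toAddSubgroup)) := by
      constructor
      · rintro ⟨i, α⟩ ⟨j, β⟩ h
        have h' : ∀ s, H i s + α = H j s + β := fun s => congrFun (congrArg Subtype.val h) s
        have hij : i = j := by
          by_contra hij
          have hc := hGH i j hij (β - α)
          have hall : ∀ s, H i s - H j s = β - α := fun s => by linear_combination h' s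
          rw [Nat.card_congr (Equiv.subtypeUnivEquiv hall), Nat.card_fin] at hc
          have := Nat.pow_right_injective hp hc
          omega
        subst hij
        have := h' ⟨0, hpos⟩
        simp only [add_right_inj] at this
        rw [this]
      · rintro ⟨v, hv⟩
        obtain ⟨i, α, rfl⟩ := (hmem v).mp hv
        exact ⟨(i, α), rfl⟩
    rw [← Nat.card_congr (Equiv.ofBijective _ hb), Nat.card_prod, Nat.card_fin,
      GaloisField.card p e (by omega), pow_add]
  · intro v hv hc a
    obtain ⟨i, α, rfl⟩ := (hmem v).mp hv
    have hi : i ≠ ⟨0, hpos⟩ := by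
      rintro rfl
      exact hc ⟨α, by ext s; rw [hrow, zero_add]⟩
    rw [← hGH i ⟨0, hpos⟩ hi (a - α)]
    refine Nat.card_congr (Equiv.subtypeEquivRight fun s => ?_)
    rw [hrow, sub_zero, eq_sub_iff_add_eq]
  · rw [← kerDim_eq, ← hk, hS]
    rfl
  · rw [← hr, hS]
    rfl

/-- Every additive generalized Hadamard code is the code of a normalized matrix. -/
lemma matrix_of_good {p e t k r : ℕ} [Fact p.Prime] (he : 0 < e)
    (h : Good (GaloisField p e) p e t k r) :
    ∃ H : Matrix (Fin (p ^ t)) (Fin (p ^ t)) (GaloisField p e),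
      IsGH (p ^ (t - e)) H ∧ IsNormalized H ∧ IsFpAdditive p (ghCode H) ∧
      kerDim (GaloisField p e) (ghCode H) = k ∧
      rankC (GaloisField p e) (ghCode H) = r := by
  have hp : 1 < p := (Fact.out : p.Prime).one_lt
  have hpos : 0 < p ^ t := pow_pos (by omega) _
  obtain ⟨ι, hι, S, hS, hk, hr⟩ := h
  -- An arbitrary coordinate serves as the first column; the rows are the words vanishing there.
  let σ : Fin (p ^ t) ≃ ι := (Finite.equivFinOfCardEq hS.card_index).symm
  let s₀ : ι := σ ⟨0, hpos⟩
  let S₀ : AddSubgroup (ι → GaloisField p e) :=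
    S ⊓ (Pi.evalAddMonoidHom (fun _ : ι => GaloisField p e) s₀).ker
  have hS₀ : ∀ v, v ∈ S₀ ↔ v ∈ S ∧ v s₀ = 0 := fun v => Iff.rfl
  have e1 : S ≃ S₀ × GaloisField p e :=
    { toFun := fun v => (⟨v.1 - (fun _ => v.1 s₀), (hS₀ _).mpr
        ⟨S.sub_mem v.2 (hS.const_mem _), by simp⟩⟩, v.1 s₀)
      invFun := fun x => ⟨x.1.1 + (fun _ => x.2), S.add_mem ((hS₀ _).mp x.1.2).1
        (hS.const_mem _)⟩
      left_inv := fun v => by ext s; simp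
      right_inv := fun x => by
        have := ((hS₀ _).mp x.1.2).2
        ext <;> simp [this] }
  have hcard : Nat.card S₀ = p ^ t := by
    have h1 := Nat.card_congr e1
    rw [Nat.card_prod, GaloisField.card p e (by omega), hS.card_code, pow_add] at h1
    exact (Nat.eq_of_mul_eq_mul_right (pow_pos (by omega) _) h1).symm
  have : Finite S₀ := Nat.finite_of_card_ne_zero (by omega)
  classical
  let ρ : Fin (p ^ t) ≃ S₀ := (Finite.equivFinOfCardEq hcard).symm.setValue ⟨0, hpos⟩ 0
  have hρ : ρ ⟨0, hpos⟩ = 0 := Equiv.setValue_eq _ _ _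
  let Φ : (ι → GaloisField p e) →ₗ[GaloisField p e] (Fin (p ^ t) → GaloisField p e) :=
    LinearMap.funLeft _ _ σ
  have hΦ : Function.Injective Φ := LinearMap.funLeft_injective_of_surjective _ _ _ σ.surjective
  let H : Matrix (Fin (p ^ t)) (Fin (p ^ t)) (GaloisField p e) :=
    fun i j => (ρ i : ι → GaloisField p e) (σ j)
  have hH : ghCode H = (S.map Φ.toAddMonoidHom : AddSubgroup _) := by
    ext w
    constructor
    · rintro ⟨i, α, rfl⟩
      exact ⟨(ρ i : ι → GaloisField p e) + (fun _ => α),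
        S.add_mem ((hS₀ _).mp (ρ i).2).1 (hS.const_mem α), rfl⟩
    · rintro ⟨v, hv, rfl⟩
      refine ⟨ρ.symm ⟨v - (fun _ => v s₀), (hS₀ _).mpr
        ⟨S.sub_mem hv (hS.const_mem _), by simp⟩⟩, v s₀, ?_⟩
      ext j
      simp [H, Φ]
  refine ⟨H, ?_, ?_, ?_, ?_, ?_⟩
  · intro i j hij a
    have hv : (ρ i : ι → GaloisField p e) - (ρ j : ι → GaloisField p e) ∈ S₀ :=
      S₀.sub_mem (ρ i).2 (ρ j).2
    rw [hS₀] at hv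
    have hnc : ¬ ∃ α, (ρ i : ι → GaloisField p e) - (ρ j : ι → GaloisField p e) = fun _ => α := by
      rintro ⟨α, hα⟩
      have hα0 : α = 0 := by rw [← hv.2, hα]
      subst hα0
      exact hij (ρ.injective (Subtype.ext (sub_eq_zero.mp hα)))
    rw [← hS.balanced _ hv.1 hnc a]
    exact Nat.card_congr (σ.subtypeEquiv fun s => Iff.rfl)
  · rintro i j (hi | hj)
    · obtain rfl : i = ⟨0, hpos⟩ := Fin.ext hi
      change (ρ ⟨0, hpos⟩ : ι → GaloisField p e) (σ j) = 0
      rw [hρ]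
      rfl
    · obtain rfl : j = ⟨0, hpos⟩ := Fin.ext hj
      exact ((hS₀ _).mp (ρ i).2).2
  · exact ⟨AddSubgroup.toZModSubmodule p (S.map Φ.toAddMonoidHom), by rw [hH]; rfl⟩
  · rw [hH, kerDim_eq, finrank_kerSub_map _ hΦ, hk]
  · rw [hH, rankC, finrank_span_map _ hΦ, hr]

theorem stmt17 (p e : ℕ) [Fact p.Prime] (he : 1 < e)
    (hyp : ∀ t' r : ℕ, e < t' →
      e + t' - 1 ≤ (e - 1) * r → r ≤ 1 + t' →
      ∃ H : Matrix (Fin (p ^ t')) (Fin (p ^ t')) (GaloisField p e),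
        IsGH (p ^ (t' - e)) H ∧ IsNormalized H ∧ IsFpAdditive p (ghCode H) ∧
        kerDim (GaloisField p e) (ghCode H) = 1 ∧
        rankC (GaloisField p e) (ghCode H) = r) :
    ∀ t k r : ℕ, e < t → 2 ≤ k → k ≤ t / e →
      e + t - k ≤ (e - 1) * r →
      (r : ℤ) ≤ 1 + t - ((e : ℤ) - 1) * ((k : ℤ) - 1) →
      ∃ H : Matrix (Fin (p ^ t)) (Fin (p ^ t)) (GaloisField p e),
        IsGH (p ^ (t - e)) H ∧ IsNormalized H ∧ IsFpAdditive p (ghCode H) ∧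
        kerDim (GaloisField p e) (ghCode H) = k ∧
        rankC (GaloisField p e) (ghCode H) = r := by
  intro t k r _ hk2 hkt hlo hhi
  have hp : 1 < p := (Fact.out : p.Prime).one_lt
  have hF : Nat.card (GaloisField p e) = p ^ e := GaloisField.card p e (by omega)
  have hkt' : k * e ≤ t := (Nat.le_div_iff_mul_le (by omega)).mp hkt
  apply matrix_of_good (by omega)
  obtain ⟨f, rfl⟩ : ∃ f, e = f + 1 := ⟨e - 1, by omega⟩
  obtain ⟨n, rfl⟩ : ∃ n, k = n + 2 := ⟨k - 2, by omega⟩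
  obtain ⟨d, rfl⟩ := Nat.exists_eq_add_of_le hkt'
  have hlo' : (f + 1) + (n + 2) * f + d ≤ f * r := by
    have h1 : f + 1 + ((n + 2) * (f + 1) + d) - (n + 2) = (f + 1) + (n + 2) * f + d := by
      rw [Nat.mul_succ]
      omega
    rw [h1, Nat.add_sub_cancel] at hlo
    exact hlo
  have hhi' : r ≤ n + 3 + f + d := by
    push_cast at hhi
    zify
    linarith
  have hr : n + 4 ≤ r := by
    by_contra hlt
    have : f * r ≤ f * (n + 3) := Nat.mul_le_mul_left f (by omega)
    nlinarith
  -- Here `t = e * k + d`; deleting `k - 1` multiplication tables leaves length `p ^ (e + d)`.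
  rcases Nat.eq_zero_or_pos d with rfl | hd
  -- For `d = 0` the hypothesis does not apply, so the start is a code with kernel dimension two.
  · have hg := (good_base (F := GaloisField p (f + 1)) (m := r - (n + 3)) hp hF (by omega)
      (by omega)).iterate (by omega) hF (by omega) n
    convert hg using 1
    · ring
    · omega
    · omega
  · obtain ⟨H, h1, h2, h3, h4, h5⟩ := hyp (f + 1 + d) (r - (n + 1)) (by omega) (by
      obtain ⟨c, rfl⟩ := Nat.exists_eq_add_of_le hr
      rw [show n + 4 + c - (n + 1) = c + 3 by omega, Nat.add_sub_cancel]
      have : f + 1 + (f + 1 + d) - 1 = 2 * f + 1 + d := by omega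
      rw [this]
      nlinarith) (by omega)
    have hg := (good_of_matrix (by omega) (by omega) H h1 h2 h3 h4 h5).iterate (by omega) hF
      (by omega) (n + 1)
    convert hg using 1
    · ring
    · omega
    · omega
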